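/- For every s ∈ {1,…,m}, the set B_s is disjoint from the neighborhood of the vertex a_{s+m−d} (subscript modulo m); consequently, for any σ ⊆ B_s, the set σ ∪ {a_{s+m−d}} is an independent set of G_m^d. -/

import Mathlib

open Finset

/-- The graph `G_m^d` on vertex set `Fin m ⊕ Fin m` (0-based indexing):
`Sum.inl i` is the vertex `a_{i+1}` and `Sum.inr j` is the vertex `b_{j+1}` of the paper;
`a_i` is adjacent to `b_j` iff `(j - i) mod m ∈ {0, …, d-1}`. -/
def Gmd (m d : ℕ) : SimpleGraph (Fin m ⊕ Fin m) :=
  SimpleGraph.fromRel (fun u v =>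
    ∃ i j : Fin m, u = Sum.inl i ∧ v = Sum.inr j ∧ (j.val + m - i.val) % m < d)

/-- A finite set of vertices is independent iff no two of its elements are adjacent. -/
def IsInd (m d : ℕ) (σ : Finset (Fin m ⊕ Fin m)) : Prop :=
  ∀ u ∈ σ, ∀ v ∈ σ, ¬ (Gmd m d).Adj u v

/-- The face poset `P` of the independence complex `Ind (G_m^d)` (ordered by `⊆`),
including the empty simplex. -/
def faceP (m d : ℕ) : Set (Finset (Fin m ⊕ Fin m)) := {σ | IsInd m d σ}

/-- One step of the matching construction: `S_x(T) = {σ ∈ T | x ∉ σ, σ ∪ {x} ∈ T}`. -/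
def stepS {α : Type*} [DecidableEq α] (x : α) (T : Set (Finset α)) : Set (Finset α) :=
  {σ | σ ∈ T ∧ x ∉ σ ∧ insert x σ ∈ T}

/-- The survivors of one step: `T \ (S_x(T) ∪ μ_x(S_x(T)))`. -/
def stepSurv {α : Type*} [DecidableEq α] (x : α) (T : Set (Finset α)) : Set (Finset α) :=
  T \ (stepS x T ∪ (insert x) '' (stepS x T))

/-- Iterating the matching construction along a list of vertices. -/
def phase {α : Type*} [DecidableEq α] (T : Set (Finset α)) (l : List α) : Set (Finset α) :=
  l.foldl (fun T x => stepSurv x T) T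

/-- The list `a_1, …, a_m`. -/
def listA (m : ℕ) : List (Fin m ⊕ Fin m) := (List.finRange m).map Sum.inl
/-- The list `b_1, …, b_m`. -/
def listB (m : ℕ) : List (Fin m ⊕ Fin m) := (List.finRange m).map Sum.inr

/-- `S_{a_{i+1}}` (0-based `i`): the set matched with `a_{i+1}` at stage `i+1` of phase one. -/
def Sa (m d : ℕ) (i : Fin m) : Set (Finset (Fin m ⊕ Fin m)) :=
  stepS (Sum.inl i) (phase (faceP m d) ((listA m).take i.val))

/-- `M = P \ (S_1 ∪ μ_1(S_1))`, the simplices surviving phase one. -/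
def setM (m d : ℕ) : Set (Finset (Fin m ⊕ Fin m)) := phase (faceP m d) (listA m)

/-- `S_{b_{i+1}}` (0-based `i`): the set matched with `b_{i+1}` at stage `i+1` of phase two. -/
def Sb (m d : ℕ) (i : Fin m) : Set (Finset (Fin m ⊕ Fin m)) :=
  stepS (Sum.inr i) (phase (setM m d) ((listB m).take i.val))

/-- `𝒮_{a_{i+1}} = S_{a_{i+1}} ∪ μ_{a_{i+1}}(S_{a_{i+1}})`. -/
def scriptSa (m d : ℕ) (i : Fin m) : Set (Finset (Fin m ⊕ Fin m)) :=
  Sa m d i ∪ (insert (Sum.inl i)) '' (Sa m d i)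

/-- `𝒮_{b_{i+1}} = S_{b_{i+1}} ∪ μ_{b_{i+1}}(S_{b_{i+1}})`. -/
def scriptSb (m d : ℕ) (i : Fin m) : Set (Finset (Fin m ⊕ Fin m)) :=
  Sb m d i ∪ (insert (Sum.inr i)) '' (Sb m d i)

/-- The critical cells `C = P \ (S ∪ μ(S))`. -/
def setC (m d : ℕ) : Set (Finset (Fin m ⊕ Fin m)) :=
  faceP m d \ ((⋃ i : Fin m, scriptSa m d i) ∪ (⋃ i : Fin m, scriptSb m d i))

/-- The matching relation: `MatchRel σ τ` iff `τ = μ(σ)` for `σ ∈ S = S_1 ∪ S_2`. -/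
def MatchRel (m d : ℕ) (σ τ : Finset (Fin m ⊕ Fin m)) : Prop :=
  (∃ i : Fin m, σ ∈ Sa m d i ∧ τ = insert (Sum.inl i) σ) ∨
  (∃ i : Fin m, σ ∈ Sb m d i ∧ τ = insert (Sum.inr i) σ)

/-- `B_{s+1} = {b_{s+1}, b_{s+2}, …, b_{s+m-d}}` (0-based `s`, subscripts mod `m`). -/
def Bset (m d : ℕ) (s : Fin m) : Finset (Fin m ⊕ Fin m) :=
  (Finset.univ.filter (fun j : Fin m => (j.val + m - s.val) % m < m - d)).image Sum.inr

/-- `b_{n+1} ∈ σ` (0-based subscript `n`). -/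
def hasB (m : ℕ) (σ : Finset (Fin m ⊕ Fin m)) (n : ℕ) : Prop :=
  ∃ j : Fin m, j.val = n ∧ Sum.inr j ∈ σ

/-- `σ ⊆ B`. -/
def onlyB (m : ℕ) (σ : Finset (Fin m ⊕ Fin m)) : Prop :=
  ∀ v ∈ σ, ∃ j : Fin m, v = Sum.inr j

/-- Property `P_l` of the paper, with parameter `j1` (0-based: the paper's `j_1 - 1`, so
`1 ≤ j1 ≤ d`).  With 0-based subscripts `i_r = (r-1)(d+1)`, `j_r = j1 + (r-1)(d+1)` and
`k = m + j1 - (d+1)`:  σ ∈ M, σ ⊆ B, the `2l` smallest subscripts of σ are exactly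
`0 = i_1, j_1, i_2, j_2, …, i_l, j_l`, the largest subscript is `k`, and
`σ \ {b_{i_r}} ∉ M`, `σ \ {b_{j_r}} ∉ M` for all `1 ≤ r ≤ l`. -/
def propP (m d l j1 : ℕ) (σ : Finset (Fin m ⊕ Fin m)) : Prop :=
  σ ∈ setM m d ∧ onlyB m σ ∧ 1 ≤ j1 ∧ j1 ≤ d ∧
  (∀ r, 1 ≤ r → r ≤ l → hasB m σ ((r-1)*(d+1)) ∧ hasB m σ (j1 + (r-1)*(d+1))) ∧
  (∀ j : Fin m, Sum.inr j ∈ σ → j.val ≤ j1 + (l-1)*(d+1) →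
      ∃ r, 1 ≤ r ∧ r ≤ l ∧ (j.val = (r-1)*(d+1) ∨ j.val = j1 + (r-1)*(d+1))) ∧
  hasB m σ (m + j1 - (d+1)) ∧
  (∀ j : Fin m, Sum.inr j ∈ σ → j.val ≤ m + j1 - (d+1)) ∧
  (∀ r, 1 ≤ r → r ≤ l → ∀ j : Fin m,
      (j.val = (r-1)*(d+1) ∨ j.val = j1 + (r-1)*(d+1)) → σ.erase (Sum.inr j) ∉ setM m d)

section IndependentSets

variable {V : Type*} {G : SimpleGraph V} {a : V} {S : Set V}

theorem isIndepSet_iff_forall_not_adj : G.IsIndepSet S ↔ ∀ u ∈ S, ∀ v ∈ S, ¬ G.Adj u v :=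
  ⟨fun h _ hu _ hv hadj => h hu hv hadj.ne hadj, fun h u hu v hv _ => h u hu v hv⟩

theorem isIndepSet_insert_iff :
    G.IsIndepSet (insert a S) ↔ G.IsIndepSet S ∧ Disjoint S (G.neighborSet a) := by
  rw [← SimpleGraph.isClique_compl, SimpleGraph.isClique_insert, SimpleGraph.isClique_compl,
    Set.disjoint_left]
  refine and_congr_right fun _ => forall₂_congr fun b _ => ?_
  rw [SimpleGraph.compl_adj, SimpleGraph.mem_neighborSet]
  exact ⟨fun h hadj => (h hadj.ne).2 hadj, fun h hne => ⟨hne, h⟩⟩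

end IndependentSets

section CyclicIntervals

variable {m d : ℕ} [NeZero m]

theorem eq_add_ofNat_of_val_eq_mod (hdm : d ≤ m) {s a : Fin m}
    (h : a.val = (s.val + m - d) % m) : s = a + Fin.ofNat m d := by
  apply Fin.ext
  calc s.val = (s.val + m - d + d) % m := by
        rw [Nat.sub_add_cancel (hdm.trans (Nat.le_add_left m s)), Nat.add_mod_right,
          Nat.mod_eq_of_lt s.isLt]
    _ = (a + Fin.ofNat m d).val := by rw [Nat.add_mod, ← h, Fin.val_add, Fin.val_ofNat]

theorem val_add_ofNat_lt_iff (hdm : d ≤ m) (t : Fin m) :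
    (t + Fin.ofNat m d).val < d ↔ m - d ≤ t.val := by
  rw [Fin.val_add, Fin.val_ofNat, Nat.add_mod_mod]
  rcases lt_or_ge (t.val + d) m with h | h
  · rw [Nat.mod_eq_of_lt h]
    omega
  · rw [Nat.mod_eq_sub_mod h, Nat.mod_eq_of_lt (by omega)]
    omega

end CyclicIntervals

section Gmd

variable {m d : ℕ}

theorem Gmd_adj_inl_inr_iff {i j : Fin m} :
    (Gmd m d).Adj (Sum.inl i) (Sum.inr j) ↔ (j - i).val < d := by
  have hcomm : j.val + m - i.val = m - i.val + j.val := by omega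
  simp [Gmd, Fin.val_sub, hcomm]

theorem inr_mem_Bset_iff {s j : Fin m} : Sum.inr j ∈ Bset m d s ↔ (j - s).val < m - d := by
  have hcomm : j.val + m - s.val = m - s.val + j.val := by omega
  simp [Bset, Fin.val_sub, hcomm]

theorem Bset_subset_range_inr (s : Fin m) :
    (Bset m d s : Set (Fin m ⊕ Fin m)) ⊆ Set.range Sum.inr := by
  simp [Bset]

theorem isIndepSet_range_inr : (Gmd m d).IsIndepSet (Set.range Sum.inr) := by
  simp [isIndepSet_iff_forall_not_adj, Gmd]

theorem neighborSet_inl_subset_range_inr (i : Fin m) :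
    (Gmd m d).neighborSet (Sum.inl i) ⊆ Set.range Sum.inr := by
  rintro (k | j) hadj
  · simp [Gmd] at hadj
  · exact ⟨j, rfl⟩

theorem isInd_iff_isIndepSet {σ : Finset (Fin m ⊕ Fin m)} :
    IsInd m d σ ↔ (Gmd m d).IsIndepSet (σ : Set (Fin m ⊕ Fin m)) :=
  isIndepSet_iff_forall_not_adj.symm

-- Let `t ∈ [0, m)` be the residue of `j - (i + d)` modulo `m`. Then `b_j ∈ B_{i+d}` iff
-- `t ∈ [0, m - d)`, while `a_i` is adjacent to `b_j` iff `t + d` wraps around to a residue in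
-- `[0, d)`, that is, iff `t ∈ [m - d, m)`.
theorem neighborSet_inl_eq_range_inr_diff_Bset [NeZero m] (hdm : d ≤ m) (i : Fin m) :
    (Gmd m d).neighborSet (Sum.inl i) =
      Set.range Sum.inr \ (Bset m d (i + Fin.ofNat m d) : Set (Fin m ⊕ Fin m)) := by
  have adj_iff (j : Fin m) : (Gmd m d).Adj (Sum.inl i) (Sum.inr j) ↔
      Sum.inr j ∉ Bset m d (i + Fin.ofNat m d) := by
    have hshift : j - i = j - (i + Fin.ofNat m d) + Fin.ofNat m d := by abel
    rw [Gmd_adj_inl_inr_iff, inr_mem_Bset_iff, not_lt, hshift, val_add_ofNat_lt_iff hdm]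
  ext v
  constructor
  · intro hadj
    obtain ⟨j, rfl⟩ := neighborSet_inl_subset_range_inr i hadj
    exact ⟨⟨j, rfl⟩, (adj_iff j).mp hadj⟩
  · rintro ⟨⟨j, rfl⟩, hj⟩
    exact (adj_iff j).mpr hj

end Gmd

/-- `B_s` is disjoint from the neighbourhood of `a_{s+m-d}` (0-based: the
`a`-vertex with index `(s + m - d) mod m`); consequently `σ ∪ {a_{s+m-d}}` is independent
for every `σ ⊆ B_s`. -/
theorem stmt5 (m d : ℕ) (hd : 1 ≤ d) (hdm : d ≤ m) (s av : Fin m)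
    (hav : av.val = (s.val + m - d) % m) :
    (∀ v ∈ Bset m d s, ¬ (Gmd m d).Adj (Sum.inl av) v) ∧
    (∀ σ : Finset (Fin m ⊕ Fin m), σ ⊆ Bset m d s →
      IsInd m d (insert (Sum.inl av) σ)) := by
  have : NeZero m := ⟨s.pos.ne'⟩
  obtain rfl : s = av + Fin.ofNat m d := eq_add_ofNat_of_val_eq_mod hdm hav
  have hdisj : Disjoint (Bset m d (av + Fin.ofNat m d) : Set (Fin m ⊕ Fin m))
      ((Gmd m d).neighborSet (Sum.inl av)) := by
    rw [neighborSet_inl_eq_range_inr_diff_Bset hdm]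
    exact Set.disjoint_sdiff_right
  refine ⟨fun _ hv => Set.disjoint_left.mp hdisj hv, fun σ hσ => ?_⟩
  rw [← Finset.coe_subset] at hσ
  rw [isInd_iff_isIndepSet, Finset.coe_insert, isIndepSet_insert_iff]
  exact ⟨isIndepSet_range_inr.mono (hσ.trans (Bset_subset_range_inr _)), hdisj.mono_left hσ⟩
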